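/- There exists an absolute constant C > 0 such that for all λ ≥ 1, all real ξ ≠ 0 and τ, all integers k₁, k₂ ≥ 0 and all K > 0 the following holds. Let Λ be the set of (ξ₁, τ₁) ∈ ℝ² such that, writing ξ₂ = ξ − ξ₁ and τ₂ = τ − τ₁: ξ₁ ≠ 0, ξ₂ ≠ 0, ⟨τ₁ + ξ₁³ + 1/(λ⁴ξ₁)⟩ ≤ 2^{k₁+1}, ⟨τ₂ + ξ₂³ + 1/(λ⁴ξ₂)⟩ ≤ 2^{k₂+1}, |ξ₁ − ξ₂| ≥ K, and either ξ₁ξ₂ > 0 or |1 + 4/(3λ⁴ξ²ξ₁ξ₂)| > 1/2. Then the two-dimensional Lebesgue measure of Λ is at most C · min{ |ξ|^{-1/2} 2^{k₁+k₂}, K^{-1} |ξ|^{-1} 2^{k₁+k₂} }. -/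

import Mathlib

open MeasureTheory Set
open scoped ENNReal NNReal

noncomputable section

/-- Japanese bracket `⟨x⟩ = (1+x²)^{1/2}`. -/
def jb (x : ℝ) : ℝ := Real.sqrt (1 + x ^ 2)

/-- Phase/modulation function `σ(ξ,τ) = τ + ξ³ + 1/(λ⁴ξ)`. -/
def phase (lam ξ τ : ℝ) : ℝ := τ + ξ ^ 3 + 1 / (lam ^ 4 * ξ)

/-!
Put `u = ξ₁ ξ₂` and `s = ξ₁ - ξ₂`, so that `4 u = ξ² - s²`. For fixed `(ξ, τ)` the sum of the two
modulations is a function of `u` alone, namely `τ + ξ³ - 3 ξ u + ξ / (λ⁴ u)`; positive dispersion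
makes both `u`-dependent terms monotone in the same direction on each half-line, so that on a range
of `u` of constant sign the function expands distances by at least `3 |ξ|`. As the sum is at most
`L₁ + L₂` in absolute value, the values of `s²` with `u` of a given sign lie in an interval of
length `≲ (L₁ + L₂) / |ξ|`. Fixing the sign of `s` as well, this confines `ξ₁` to an interval of
length `≲ ((L₁ + L₂) / |ξ|)^{1/2}`, and, since `|s| ≥ K`, also `≲ (L₁ + L₂) / (K |ξ|)`. For given
`ξ₁`, the variable `τ₁` ranges over an interval of length at most `2 min L₁ L₂`.
-/

lemma abs_le_jb (x : ℝ) : |x| ≤ jb x :=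
  Real.abs_le_sqrt (by linarith)

section Elementary

variable {R : Type*} [CommRing R] [LinearOrder R] [IsStrictOrderedRing R] {a b K : R}

lemma abs_sq_sub_sq_of_mul_nonneg (hab : 0 ≤ a * b) :
    |a ^ 2 - b ^ 2| = (|a| + |b|) * |a - b| := by
  rw [sq_sub_sq, abs_mul, (abs_add_eq_add_abs_iff a b).2 (mul_nonneg_iff.1 hab)]

lemma sq_abs_sub_le_abs_sq_sub_sq (hab : 0 ≤ a * b) : |a - b| ^ 2 ≤ |a ^ 2 - b ^ 2| := by
  rw [abs_sq_sub_sq_of_mul_nonneg hab, sq]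
  exact mul_le_mul_of_nonneg_right (abs_sub a b) (abs_nonneg _)

lemma two_mul_mul_abs_sub_le_abs_sq_sub_sq (hab : 0 ≤ a * b) (ha : K ≤ |a|) (hb : K ≤ |b|) :
    2 * K * |a - b| ≤ |a ^ 2 - b ^ 2| := by
  rw [abs_sq_sub_sq_of_mul_nonneg hab]
  exact mul_le_mul_of_nonneg_right (by linarith) (abs_nonneg _)

end Elementary

lemma volume_le_card_mul_of_abs_sub_le {ι : Type*} [Fintype ι] (label : ℝ → ι) {A : Set ℝ} {d : ℝ}
    (h : ∀ x ∈ A, ∀ y ∈ A, label x = label y → |x - y| ≤ d) :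
    volume A ≤ Fintype.card ι * ENNReal.ofReal d := by
  have hcover : A ⊆ ⋃ i, A ∩ label ⁻¹' {i} := fun x hx => mem_iUnion.2 ⟨label x, hx, rfl⟩
  have hpiece (i : ι) : volume (A ∩ label ⁻¹' {i}) ≤ ENNReal.ofReal d := by
    refine (Real.volume_le_diam _).trans (Metric.ediam_le ?_)
    rintro x ⟨hx, hxi⟩ y ⟨hy, hyi⟩
    rw [edist_dist, Real.dist_eq]
    exact ENNReal.ofReal_le_ofReal (h x hx y hy (hxi.trans hyi.symm))
  calc volume A ≤ ∑ i, volume (A ∩ label ⁻¹' {i}) :=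
        (measure_mono hcover).trans (measure_iUnion_fintype_le _ _)
    _ ≤ ∑ _i : ι, ENNReal.ofReal d := Finset.sum_le_sum fun i _ => hpiece i
    _ = Fintype.card ι * ENNReal.ofReal d := by
        rw [Finset.sum_const, Finset.card_univ, nsmul_eq_mul]

lemma prod_volume_le_of_abs_sub_le {α : Type*} [MeasurableSpace α] (μ : Measure α) [SFinite μ]
    {g : α → ℝ} (hg : Measurable g) {S : Set (α × ℝ)} {r : ℝ}
    (h : ∀ q ∈ S, |q.2 - g q.1| ≤ r) :
    μ.prod volume S ≤ μ (Prod.fst '' S) * ENNReal.ofReal (2 * r) := by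
  -- The shear `(x, t) ↦ (x, t - g x)` flattens the strip around the graph into a rectangle.
  have hshear : MeasurePreserving (fun q : α × ℝ => (q.1, q.2 - g q.1))
      (μ.prod volume) (μ.prod volume) :=
    (MeasurePreserving.id μ).skew_product (g := fun x t => t - g x) (by fun_prop)
      (Filter.Eventually.of_forall fun x => (measurePreserving_sub_right volume (g x)).map_eq)
  set E := toMeasurable μ (Prod.fst '' S)
  have hE : MeasurableSet (E ×ˢ Icc (-r) r) :=
    (measurableSet_toMeasurable _ _).prod measurableSet_Icc
  have hsub : S ⊆ (fun q : α × ℝ => (q.1, q.2 - g q.1)) ⁻¹' (E ×ˢ Icc (-r) r) := fun q hq =>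
    ⟨subset_toMeasurable _ _ ⟨q, hq, rfl⟩, abs_le.1 (h q hq)⟩
  calc μ.prod volume S ≤ μ.prod volume (E ×ˢ Icc (-r) r) :=
        (measure_mono hsub).trans_eq (hshear.measure_preimage hE.nullMeasurableSet)
    _ = μ (Prod.fst '' S) * ENNReal.ofReal (2 * r) := by
        rw [Measure.prod_prod, measure_toMeasurable, Real.volume_Icc, sub_neg_eq_add, two_mul]

/-- The sum of the modulations of `(ξ₁, τ₁)` and `(ξ - ξ₁, τ - τ₁)`, expressed through the product
`u = ξ₁ (ξ - ξ₁)`, on which alone it depends once `ξ` and `τ` are fixed. -/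
def modulationSum (lam ξ τ u : ℝ) : ℝ := τ + ξ ^ 3 - 3 * ξ * u + ξ / (lam ^ 4 * u)

/-- The points `(ξ₁, τ₁)` such that the modulations of `(ξ₁, τ₁)` and `(ξ - ξ₁, τ - τ₁)` are at most
`L₁` and `L₂` and the frequencies `ξ₁`, `ξ - ξ₁` are nonzero and at least `K` apart. -/
def modulationSet (lam ξ τ K L₁ L₂ : ℝ) : Set (ℝ × ℝ) :=
  {q | q.1 ≠ 0 ∧ ξ - q.1 ≠ 0 ∧ |phase lam q.1 q.2| ≤ L₁ ∧
    |phase lam (ξ - q.1) (τ - q.2)| ≤ L₂ ∧ K ≤ |q.1 - (ξ - q.1)|}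

/-- The frequencies `ξ₁` that can occur in `modulationSet lam ξ τ K L₁ L₂` when `L₁ + L₂ = M`. -/
def modulationFrequencies (lam ξ τ K M : ℝ) : Set ℝ :=
  {x | x ≠ 0 ∧ ξ - x ≠ 0 ∧ |modulationSum lam ξ τ (x * (ξ - x))| ≤ M ∧ K ≤ |x - (ξ - x)|}

section Modulation

variable {lam ξ τ K L₁ L₂ M : ℝ}

lemma phase_add_phase (hlam : lam ≠ 0) {x t : ℝ} (hx : x ≠ 0) (hξx : ξ - x ≠ 0) :
    phase lam x t + phase lam (ξ - x) (τ - t) = modulationSum lam ξ τ (x * (ξ - x)) := by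
  unfold phase modulationSum
  field_simp
  ring

lemma three_mul_abs_sub_le_abs_modulationSum_sub (hlam : lam ≠ 0) {u v : ℝ} (huv : 0 < u * v) :
    3 * |ξ| * |u - v| ≤ |modulationSum lam ξ τ u - modulationSum lam ξ τ v| := by
  have hu : u ≠ 0 := left_ne_zero_of_mul huv.ne'
  have hv : v ≠ 0 := right_ne_zero_of_mul huv.ne'
  have hfactor : modulationSum lam ξ τ u - modulationSum lam ξ τ v =
      -((3 + 1 / (lam ^ 4 * (u * v))) * ξ * (u - v)) := by
    unfold modulationSum
    field_simp
    ring
  have hthree : 3 ≤ |3 + 1 / (lam ^ 4 * (u * v))| :=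
    (le_add_of_nonneg_right (by positivity)).trans (le_abs_self _)
  rw [hfactor, abs_neg, abs_mul, abs_mul]
  gcongr

lemma abs_sub_le_of_mem_modulationFrequencies (hlam : lam ≠ 0) (hξ : ξ ≠ 0) (hK : 0 < K) {x y : ℝ}
    (hx : x ∈ modulationFrequencies lam ξ τ K M) (hy : y ∈ modulationFrequencies lam ξ τ K M)
    (hprod : 0 < (x * (ξ - x)) * (y * (ξ - y)))
    (hdiff : 0 ≤ (x - (ξ - x)) * (y - (ξ - y))) :
    |x - y| ≤ min √(2 * M / (3 * |ξ|)) (2 * M / (3 * |ξ|) / K) := by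
  obtain ⟨-, -, hxM, hxK⟩ := hx
  obtain ⟨-, -, hyM, hyK⟩ := hy
  have hu : |x * (ξ - x) - y * (ξ - y)| ≤ 2 * M / (3 * |ξ|) := by
    rw [le_div_iff₀' (by positivity)]
    calc 3 * |ξ| * |x * (ξ - x) - y * (ξ - y)|
        ≤ |modulationSum lam ξ τ (x * (ξ - x)) - modulationSum lam ξ τ (y * (ξ - y))| :=
          three_mul_abs_sub_le_abs_modulationSum_sub hlam hprod
      _ ≤ 2 * M := (abs_sub _ _).trans (by linarith)
  have hsq : |(x - (ξ - x)) ^ 2 - (y - (ξ - y)) ^ 2| ≤ 4 * (2 * M / (3 * |ξ|)) := by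
    rw [show (x - (ξ - x)) ^ 2 - (y - (ξ - y)) ^ 2 = -4 * (x * (ξ - x) - y * (ξ - y)) by ring,
      abs_mul, abs_neg, abs_of_pos four_pos]
    linarith
  have htwo : |(x - (ξ - x)) - (y - (ξ - y))| = 2 * |x - y| := by
    rw [show (x - (ξ - x)) - (y - (ξ - y)) = 2 * (x - y) by ring, abs_mul, abs_two]
  have hquad := (sq_abs_sub_le_abs_sq_sub_sq hdiff).trans hsq
  have hlin := (two_mul_mul_abs_sub_le_abs_sq_sub_sq hdiff hxK hyK).trans hsq
  rw [htwo] at hquad hlin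
  refine le_min (Real.le_sqrt_of_sq_le (by linarith)) ?_
  rw [le_div_iff₀ hK]
  linarith

lemma volume_modulationFrequencies_le (hlam : lam ≠ 0) (hξ : ξ ≠ 0) (hK : 0 < K) :
    volume (modulationFrequencies lam ξ τ K M) ≤
      4 * ENNReal.ofReal (min √(2 * M / (3 * |ξ|)) (2 * M / (3 * |ξ|) / K)) := by
  have hbound := volume_le_card_mul_of_abs_sub_le
    (fun x : ℝ => ((0 < x * (ξ - x), 0 ≤ x - (ξ - x)) : Prop × Prop))
    (A := modulationFrequencies lam ξ τ K M)
    (d := min √(2 * M / (3 * |ξ|)) (2 * M / (3 * |ξ|) / K)) ?_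
  · simpa [Fintype.card_prod, show (2 : ℝ≥0∞) * 2 = 4 by norm_num] using hbound
  · intro x hx y hy hlabel
    obtain ⟨hprod, hdiff⟩ := Prod.mk.inj hlabel
    have hx0 : x * (ξ - x) ≠ 0 := mul_ne_zero hx.1 hx.2.1
    have hy0 : y * (ξ - y) ≠ 0 := mul_ne_zero hy.1 hy.2.1
    refine abs_sub_le_of_mem_modulationFrequencies hlam hξ hK hx hy ?_ ?_
    · rcases hx0.lt_or_gt with h | h
      · exact mul_pos_of_neg_of_neg h (hy0.lt_of_le (not_lt.1 (hprod ▸ h.not_gt)))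
      · exact mul_pos h (hprod ▸ h)
    · rcases le_or_gt 0 (x - (ξ - x)) with h | h
      · exact mul_nonneg h (hdiff ▸ h)
      · exact mul_nonneg_of_nonpos_of_nonpos h.le (not_le.1 (hdiff ▸ h.not_ge)).le

lemma fst_image_modulationSet_subset (hlam : lam ≠ 0) :
    Prod.fst '' modulationSet lam ξ τ K L₁ L₂ ⊆ modulationFrequencies lam ξ τ K (L₁ + L₂) := by
  rintro _ ⟨⟨x, t⟩, ⟨hx, hξx, h₁, h₂, hK⟩, rfl⟩
  refine ⟨hx, hξx, ?_, hK⟩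
  rw [← phase_add_phase hlam hx hξx]
  exact (abs_add_le _ _).trans (add_le_add h₁ h₂)

lemma volume_modulationSet_le_fst_image_mul_min :
    volume (modulationSet lam ξ τ K L₁ L₂) ≤
      volume (Prod.fst '' modulationSet lam ξ τ K L₁ L₂) * ENNReal.ofReal (2 * min L₁ L₂) := by
  rcases min_choice L₁ L₂ with h | h <;> rw [h]
  · refine prod_volume_le_of_abs_sub_le volume
      (g := fun x => -(x ^ 3 + 1 / (lam ^ 4 * x))) (by fun_prop) fun q hq => ?_
    rw [show q.2 - -(q.1 ^ 3 + 1 / (lam ^ 4 * q.1)) = phase lam q.1 q.2 by unfold phase; ring]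
    exact hq.2.2.1
  · refine prod_volume_le_of_abs_sub_le volume
      (g := fun x => τ + (ξ - x) ^ 3 + 1 / (lam ^ 4 * (ξ - x))) (by fun_prop) fun q hq => ?_
    rw [show q.2 - (τ + (ξ - q.1) ^ 3 + 1 / (lam ^ 4 * (ξ - q.1))) =
      -phase lam (ξ - q.1) (τ - q.2) by unfold phase; ring, abs_neg]
    exact hq.2.2.2.1

lemma volume_modulationSet_le (hlam : lam ≠ 0) (hξ : ξ ≠ 0) (hK : 0 < K) :
    volume (modulationSet lam ξ τ K L₁ L₂) ≤
      4 * ENNReal.ofReal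
          (min √(2 * (L₁ + L₂) / (3 * |ξ|)) (2 * (L₁ + L₂) / (3 * |ξ|) / K)) *
        ENNReal.ofReal (2 * min L₁ L₂) :=
  volume_modulationSet_le_fst_image_mul_min.trans <| mul_le_mul_left
    ((measure_mono (fst_image_modulationSet_subset hlam)).trans
      (volume_modulationFrequencies_le hlam hξ hK)) _

lemma min_sqrt_div_le_mul_min_rpow {r : ℝ} (hr : 0 < r) (hK : 0 < K) (hM : 1 ≤ M) :
    min √(2 * M / (3 * r)) (2 * M / (3 * r) / K) ≤ M * min (r ^ (-(1 : ℝ) / 2)) (K⁻¹ * r⁻¹) := by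
  have hrpow : r ^ (-(1 : ℝ) / 2) = √(r⁻¹) := by
    rw [Real.sqrt_eq_rpow, Real.inv_rpow hr.le, ← Real.rpow_neg hr.le, neg_div]
  rw [mul_min_of_nonneg _ _ (by linarith), hrpow]
  refine min_le_min ?_ ?_
  · calc √(2 * M / (3 * r)) ≤ √(M ^ 2 * r⁻¹) := by
          refine Real.sqrt_le_sqrt ?_
          rw [mul_div_mul_comm, div_eq_mul_inv M, ← mul_assoc]
          gcongr
          nlinarith
      _ = M * √(r⁻¹) := by rw [Real.sqrt_mul (sq_nonneg M), Real.sqrt_sq (by linarith)]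
  · calc 2 * M / (3 * r) / K = 2 / 3 * (M * (K⁻¹ * r⁻¹)) := by field_simp
      _ ≤ M * (K⁻¹ * r⁻¹) := mul_le_of_le_one_left (by positivity) (by norm_num)

theorem ostrovsky_measure_bound_general (hlam : lam ≠ 0) (hξ : ξ ≠ 0) (hK : 0 < K)
    (hL₁ : 1 ≤ L₁) (hL₂ : 1 ≤ L₂) :
    volume (modulationSet lam ξ τ K L₁ L₂) ≤
      ENNReal.ofReal (16 * (min (|ξ| ^ (-(1 : ℝ) / 2)) (K⁻¹ * |ξ|⁻¹) * (L₁ * L₂))) := by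
  set m := min (|ξ| ^ (-(1 : ℝ) / 2)) (K⁻¹ * |ξ|⁻¹)
  have hm : 0 ≤ m := by positivity
  have hmin : 0 ≤ min L₁ L₂ := le_min (by linarith) (by linarith)
  have hsum : (L₁ + L₂) * min L₁ L₂ ≤ 2 * (L₁ * L₂) :=
    calc (L₁ + L₂) * min L₁ L₂ ≤ (2 * max L₁ L₂) * min L₁ L₂ :=
          mul_le_mul_of_nonneg_right (by linarith [le_max_left L₁ L₂, le_max_right L₁ L₂]) hmin
      _ = 2 * (L₁ * L₂) := by rw [mul_assoc, max_mul_min]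
  calc volume (modulationSet lam ξ τ K L₁ L₂)
      ≤ 4 * ENNReal.ofReal ((L₁ + L₂) * m) * ENNReal.ofReal (2 * min L₁ L₂) := by
        refine (volume_modulationSet_le hlam hξ hK).trans ?_
        gcongr
        exact min_sqrt_div_le_mul_min_rpow (abs_pos.2 hξ) hK (by linarith)
    _ = ENNReal.ofReal (8 * m * ((L₁ + L₂) * min L₁ L₂)) := by
        rw [← ENNReal.ofReal_ofNat 4, ← ENNReal.ofReal_mul (by norm_num),
          ← ENNReal.ofReal_mul (by positivity)]
        ring_nf
    _ ≤ ENNReal.ofReal (16 * (m * (L₁ * L₂))) := by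
        refine ENNReal.ofReal_le_ofReal ?_
        linarith [mul_le_mul_of_nonneg_left hsum hm]

end Modulation

/-- Measure bound for the set of near frequencies with localized modulations, under the
nonresonance condition of the Ostrovsky equation with positive dispersion. -/
theorem ostrovsky_measure_bound :
    ∃ C : ℝ, 0 < C ∧ ∀ lam : ℝ, 1 ≤ lam → ∀ ξ τ : ℝ, ξ ≠ 0 →
    ∀ k₁ k₂ : ℕ, ∀ K : ℝ, 0 < K →
      volume {q : ℝ × ℝ |
          q.1 ≠ 0 ∧ ξ - q.1 ≠ 0 ∧
          jb (phase lam q.1 q.2) ≤ 2 ^ (k₁ + 1) ∧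
          jb (phase lam (ξ - q.1) (τ - q.2)) ≤ 2 ^ (k₂ + 1) ∧
          K ≤ |q.1 - (ξ - q.1)| ∧
          (0 < q.1 * (ξ - q.1) ∨
            1 / 2 < |1 + 4 / (3 * lam ^ 4 * ξ ^ 2 * q.1 * (ξ - q.1))|)}
        ≤ ENNReal.ofReal (C * min (|ξ| ^ (-(1 : ℝ) / 2) * 2 ^ (k₁ + k₂))
            (K⁻¹ * |ξ|⁻¹ * 2 ^ (k₁ + k₂))) := by
  refine ⟨64, by norm_num, fun lam hlam ξ τ hξ k₁ k₂ K hK => ?_⟩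
  calc
    _ ≤ volume (modulationSet lam ξ τ K (2 ^ (k₁ + 1)) (2 ^ (k₂ + 1))) := by
      refine measure_mono ?_
      rintro q ⟨hq, hξq, h₁, h₂, hKq, -⟩
      exact ⟨hq, hξq, (abs_le_jb _).trans h₁, (abs_le_jb _).trans h₂, hKq⟩
    _ ≤ _ := ostrovsky_measure_bound_general (zero_lt_one.trans_le hlam).ne' hξ hK
      (one_le_pow₀ one_le_two) (one_le_pow₀ one_le_two)
    _ = _ := by rw [← min_mul_of_nonneg _ _ (by positivity)]; ring_nf

end
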